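/- For 0 ≤ m ≤ n let e_m ∈ End_ℂ(V) be the coefficient of t^m in the column-determinant of 1 + tA, computed in the polynomial ring End_ℂ(V)[t]. Then for all 0 ≤ i ≤ m ≤ n: the coefficient operators satisfy e_m = ∑_{i=0}^{m} binom(n−m+i, i)·M_{w_{m−i}}∘∂^{i}, where w_0 = 1 and w_1,…,w_n are as in the context; equivalently, writing e_m = ∑_{i=0}^{m} M_{e_{m,i}}∘∂^i with unique e_{m,i} ∈ V, one has e_{m,i} = binom(n−m+i, i)·w_{m−i}. -/

import Mathlib

/-! The operators `∂` and `M_g` satisfy `∂ M_g = M_g ∂ + M_{δ g}`, and so do `∂ + s` and `M_g` for a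
central indeterminate `s`. Hence the normal ordering of any noncommutative polynomial expression in
`∂` and the `M_g` is unaffected by the shift `∂ ↦ ∂ + s`: if `cdet A = ∑ M_{w_k} ∂^{n-k}`, then
`cdet (s + A) = ∑ M_{w_k} (∂ + s)^{n-k}`. Expanding by the binomial theorem, and using that the
coefficient of `t^m` in `cdet (1 + tA)` is the coefficient of `s^{n-m}` in `cdet (s + A)`
(`coeff_cdet_reverse`), gives the formula for `e_m`.

Normal ordering is carried out on symbols, that is, on ordinary polynomials `p = ∑ p_k X^k` over
`V`, which `eval₂ ι d` turns into the operators `∑ ι(p_k) d^k`. Left multiplication by `d` or `ι g`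
lifts to the operators `symD` or `symM` on symbols, and these lifts do not depend on the realization
`(ι, d)`. So the column-determinant `cdet (symA n)` of the lifted matrix, applied to the symbol `1`,
is the symbol of both `cdet A` (`cdet_eq_eval`) and `cdet (s + A)` (`cdet_shift_eq_eval`).

Only the identity permutation contributes `n` diagonal entries, and only diagonal entries raise the
degree of a symbol, so this symbol is monic of degree `n`; this gives existence of `w`. Uniqueness is
the injectivity of the passage from symbols to operators on `V`
(`eval_injective`): applied to a variable `E^{(N)}` with `N` large, the operator
`∑ M_{p_k} ∂^k` yields `∑ p_k E^{(N+k)}`, from which each `p_k` is recovered by a partial derivative. -/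

noncomputable section

open MvPolynomial

/-- The column-determinant `∑_{σ∈S_n} sgn(σ)·A_{σ(1),1}⋯A_{σ(n),n}` of a square matrix over a
(possibly noncommutative) ring. -/
def cdet {R : Type*} [Ring R] {m : ℕ} (A : Matrix (Fin m) (Fin m) R) : R :=
  ∑ σ : Equiv.Perm (Fin m),
    (Equiv.Perm.sign σ : ℤ) • ((List.finRange m).map (fun i => A (σ i) i)).prod

/-- Index set for the variables: pairs `(k,l)` with `n ≥ k ≥ l ≥ 1` (here `0`-based). -/
def IdxA (n : ℕ) := {p : Fin n × Fin n // p.2 ≤ p.1}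

instance (n : ℕ) : Fintype (IdxA n) := Subtype.fintype _

/-- `V`: the polynomial algebra `ℂ[E_{kl}^{(s)} : n ≥ k ≥ l ≥ 1, s ≥ 0]`. -/
abbrev VA (n : ℕ) := MvPolynomial (IdxA n × ℕ) ℂ

/-- The derivation `δ` of `V` with `δ(E_{kl}^{(s)}) = E_{kl}^{(s+1)}`. -/
def delA (n : ℕ) : Derivation ℂ (VA n) (VA n) :=
  MvPolynomial.mkDerivation ℂ (fun v => X (v.1, v.2 + 1))

/-- `∂ := δ`, viewed as a `ℂ`-linear endomorphism of `V`. -/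
def DelA (n : ℕ) : Module.End ℂ (VA n) := (delA n).toLinearMap

/-- `M_g`: multiplication by `g ∈ V`, as a `ℂ`-linear endomorphism of `V`. -/
def MA (n : ℕ) (g : VA n) : Module.End ℂ (VA n) := LinearMap.mulLeft ℂ g

/-- The `n × n` matrix over `End_ℂ(V)` with `(i,j)` entry `δ_{ij}∂ + M_{E_{ij}}` for `i ≥ j`,
the identity at `(i,i+1)`, and `0` for `j > i+1`. -/
def AmatA (n : ℕ) : Matrix (Fin n) (Fin n) (Module.End ℂ (VA n)) :=
  Matrix.of fun i j =>
    if h : j ≤ i then (if i = j then DelA n else 0) + MA n (X (⟨(i, j), h⟩, 0))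
    else if (j : ℕ) = (i : ℕ) + 1 then 1 else 0

/-- `e_m`: the coefficient of `t^m` in the column-determinant of `1 + tA`, computed in
`End_ℂ(V)[t]`. -/
def eA (n : ℕ) (m : ℕ) : Module.End ℂ (VA n) :=
  Polynomial.coeff
    (cdet (Matrix.of fun i j =>
      (if i = j then 1 else 0) + Polynomial.X * Polynomial.C (AmatA n i j))) m

/-- The extension of `w : Fin n → V` to `1`-based indices `0,…,n`, with `w_0 = 1`. -/
def wext (n : ℕ) (w : Fin n → VA n) (j : ℕ) : VA n :=
  if h : 1 ≤ j ∧ j ≤ n then w ⟨j - 1, by omega⟩ else 1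

/-! ### Symbols and their realizations -/

/-- The derivation `δ` applied to each coefficient of a polynomial over `V`. -/
def coeffDel (n : ℕ) : Module.End ℂ (Polynomial (VA n)) :=
  Polynomial.lsum fun k =>
    ((Polynomial.monomial k : VA n →ₗ[VA n] Polynomial (VA n)).restrictScalars ℂ) ∘ₗ
      (delA n).toLinearMap

/-- Left multiplication by `∂` on symbols: `p ↦ X p + δ(p)`. -/
def symD (n : ℕ) : Module.End ℂ (Polynomial (VA n)) :=
  LinearMap.mulLeft ℂ Polynomial.X + coeffDel n

/-- Left multiplication by `M_g` on symbols. -/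
def symM (n : ℕ) (g : VA n) : Module.End ℂ (Polynomial (VA n)) :=
  LinearMap.mulLeft ℂ (Polynomial.C g)

/-- The matrix `AmatA n` with `∂` and `M_g` replaced by their actions on symbols. -/
def symA (n : ℕ) : Matrix (Fin n) (Fin n) (Module.End ℂ (Polynomial (VA n))) :=
  Matrix.of fun i j =>
    if h : j ≤ i then (if i = j then symD n else 0) + symM n (X (⟨(i, j), h⟩, 0))
    else if (j : ℕ) = (i : ℕ) + 1 then 1 else 0

/-- `g ↦ M_g` as a ring homomorphism. -/
def mulHom (n : ℕ) : VA n →+* Module.End ℂ (VA n) :=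
  (Algebra.lmul ℂ (VA n)).toRingHom

lemma mulHom_apply (n : ℕ) (g : VA n) : mulHom n g = MA n g := rfl

lemma coeffDel_monomial (n k : ℕ) (a : VA n) :
    coeffDel n (Polynomial.monomial k a) = Polynomial.monomial k (delA n a) := by
  simp [coeffDel, Polynomial.lsum_apply, Polynomial.sum_monomial_index]

lemma coeff_coeffDel (n : ℕ) (p : Polynomial (VA n)) (j : ℕ) :
    (coeffDel n p).coeff j = delA n (p.coeff j) := by
  induction p using Polynomial.induction_on' with
  | add p q hp hq => simp [hp, hq]
  | monomial k a =>
    rw [coeffDel_monomial, Polynomial.coeff_monomial, Polynomial.coeff_monomial]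
    split_ifs <;> simp

lemma natDegree_coeffDel_le (n : ℕ) (p : Polynomial (VA n)) :
    (coeffDel n p).natDegree ≤ p.natDegree := by
  rw [Polynomial.natDegree_le_iff_coeff_eq_zero]
  intro N hN
  rw [coeff_coeffDel, Polynomial.coeff_eq_zero_of_natDegree_lt hN, map_zero]

section Realization

variable {S : Type*} [Ring S] (n : ℕ) (ι : VA n →+* S) (d : S)

lemma eval_symM (g : VA n) (p : Polynomial (VA n)) :
    (symM n g p).eval₂ ι d = ι g * p.eval₂ ι d := by
  induction p using Polynomial.induction_on' with
  | add p q hp hq => simp [Polynomial.eval₂_add, hp, hq, mul_add]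
  | monomial k a =>
    simp [symM, Polynomial.C_mul_monomial, Polynomial.eval₂_monomial, mul_assoc]

lemma eval_symD (hd : ∀ g, d * ι g = ι g * d + ι (delA n g)) (p : Polynomial (VA n)) :
    (symD n p).eval₂ ι d = d * p.eval₂ ι d := by
  induction p using Polynomial.induction_on' with
  | add p q hp hq => simp only [map_add, Polynomial.eval₂_add, hp, hq, mul_add]
  | monomial k a =>
    simp only [symD, LinearMap.add_apply, LinearMap.mulLeft_apply, coeffDel_monomial,
      Polynomial.X_mul_monomial, Polynomial.eval₂_add, Polynomial.eval₂_monomial]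
    rw [← mul_assoc, hd, pow_succ', add_mul, mul_assoc]

/-- Column-determinants of matrices whose entries are intertwined by the passage from symbols to
operators are themselves intertwined. -/
lemma eval_cdet {m : ℕ} (F : Matrix (Fin m) (Fin m) (Module.End ℂ (Polynomial (VA n))))
    (B : Matrix (Fin m) (Fin m) S)
    (h : ∀ i j p, (F i j p).eval₂ ι d = B i j * p.eval₂ ι d) (p : Polynomial (VA n)) :
    (cdet F p).eval₂ ι d = cdet B * p.eval₂ ι d := by
  have hl : ∀ (σ : Equiv.Perm (Fin m)) (l : List (Fin m)),
      ((l.map fun i => F (σ i) i).prod p).eval₂ ι d =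
        (l.map fun i => B (σ i) i).prod * p.eval₂ ι d := by
    intro σ l
    induction l with
    | nil => simp
    | cons a l ih => simp [h, ih, mul_assoc]
  unfold cdet
  rw [LinearMap.sum_apply, Polynomial.eval₂_finsetSum, Finset.sum_mul]
  refine Finset.sum_congr rfl fun σ _ => ?_
  rw [smul_mul_assoc, ← hl]
  exact map_zsmul (Polynomial.eval₂AddMonoidHom ι d) _ _

end Realization

/-! ### The symbol of the column-determinant -/

lemma DelA_mul_mulHom (n : ℕ) (g : VA n) :
    DelA n * mulHom n g = mulHom n g * DelA n + mulHom n (delA n g) := by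
  refine LinearMap.ext fun v => ?_
  change delA n (g * v) = g * delA n v + delA n g * v
  rw [Derivation.leibniz, smul_eq_mul, smul_eq_mul, mul_comm v]

/-- The symbol of `cdet (AmatA n)`. -/
def symbolA (n : ℕ) : Polynomial (VA n) := cdet (symA n) 1

lemma cdet_eq_eval (n : ℕ) :
    cdet (AmatA n) = (symbolA n).eval₂ (mulHom n) (DelA n) := by
  rw [symbolA, eval_cdet n _ _ (symA n) (AmatA n), Polynomial.eval₂_one, mul_one]
  intro i j p
  simp only [symA, AmatA, Matrix.of_apply]
  split_ifs <;>
    simp [Polynomial.eval₂_add, eval_symM, eval_symD n _ _ (DelA_mul_mulHom n), mulHom_apply,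
      add_mul]

/-- Shifting `∂` by the central indeterminate leaves the symbol unchanged. -/
lemma cdet_shift_eq_eval (n : ℕ) :
    cdet (Matrix.of fun i j =>
        Polynomial.X * Polynomial.C (if i = j then 1 else 0) + Polynomial.C (AmatA n i j)) =
      (symbolA n).eval₂ (Polynomial.C.comp (mulHom n)) (Polynomial.X + Polynomial.C (DelA n)) := by
  have hd : ∀ g, (Polynomial.X + Polynomial.C (DelA n)) * (Polynomial.C.comp (mulHom n)) g =
      (Polynomial.C.comp (mulHom n)) g * (Polynomial.X + Polynomial.C (DelA n)) +
        (Polynomial.C.comp (mulHom n)) (delA n g) := by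
    intro g
    simp only [RingHom.comp_apply, add_mul, mul_add, ← Polynomial.C_mul, DelA_mul_mulHom,
      Polynomial.C_add, Polynomial.X_mul_C, add_assoc]
  have hM := eval_symM n (Polynomial.C.comp (mulHom n)) (Polynomial.X + Polynomial.C (DelA n))
  have hD := eval_symD n (Polynomial.C.comp (mulHom n)) (Polynomial.X + Polynomial.C (DelA n)) hd
  have key := eval_cdet n (Polynomial.C.comp (mulHom n)) (Polynomial.X + Polynomial.C (DelA n))
    (symA n) (Matrix.of fun i j =>
      Polynomial.X * Polynomial.C (if i = j then 1 else 0) + Polynomial.C (AmatA n i j)) ?_ 1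
  · rw [symbolA, key, Polynomial.eval₂_one, mul_one]
  intro i j p
  simp only [symA, AmatA, Matrix.of_apply]
  by_cases h : j ≤ i
  · by_cases hij : i = j
    · simp [hij, Polynomial.eval₂_add, hM, hD, mulHom_apply, add_mul, add_assoc]
    · simp [h, hij, hM, mulHom_apply]
  · have hij : i ≠ j := fun e => h e.ge
    by_cases h1 : (j : ℕ) = i + 1 <;> simp [h, hij, h1]

lemma natDegree_symM_le (n : ℕ) (g : VA n) (p : Polynomial (VA n)) :
    (symM n g p).natDegree ≤ p.natDegree :=
  Polynomial.natDegree_C_mul_le _ _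

lemma natDegree_symD_le (n : ℕ) (p : Polynomial (VA n)) :
    (symD n p).natDegree ≤ p.natDegree + 1 := by
  refine Polynomial.natDegree_add_le_of_degree_le ?_
    ((natDegree_coeffDel_le n p).trans (Nat.le_succ _))
  rw [add_comm]
  exact Polynomial.natDegree_mul_le.trans (Nat.add_le_add_right Polynomial.natDegree_X_le _)

lemma natDegree_symA_le (n : ℕ) (i j : Fin n) (p : Polynomial (VA n)) :
    (symA n i j p).natDegree ≤ p.natDegree + if i = j then 1 else 0 := by
  by_cases h : j ≤ i
  · by_cases hij : i = j
    · subst hij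
      have e : symA n i i = symD n + symM n (X (⟨(i, i), h⟩, 0)) := by simp [symA]
      rw [e, LinearMap.add_apply, if_pos rfl]
      exact Polynomial.natDegree_add_le_of_degree_le (natDegree_symD_le n p)
        ((natDegree_symM_le n _ p).trans (Nat.le_succ _))
    · have e : symA n i j = symM n (X (⟨(i, j), h⟩, 0)) := by simp [symA, h, hij]
      rw [e, if_neg hij]
      exact natDegree_symM_le n _ p
  · by_cases h1 : (j : ℕ) = i + 1 <;> simp [symA, h, h1]

lemma natDegree_prod_symA_le (n : ℕ) (σ : Equiv.Perm (Fin n)) (l : List (Fin n)) :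
    ((l.map fun i => symA n (σ i) i).prod 1).natDegree ≤ (l.filter fun i => σ i = i).length := by
  induction l with
  | nil => simp
  | cons a l ih =>
    rw [List.map_cons, List.prod_cons, Module.End.mul_apply]
    refine (natDegree_symA_le n _ _ _).trans ?_
    by_cases h : σ a = a <;> simp [h, ih]

/-- The diagonal product has a symbol whose top coefficient is `1`. -/
lemma coeff_prod_diag (n : ℕ) (l : List (Fin n)) :
    ((l.map fun i => symA n i i).prod 1).coeff l.length = 1 := by
  induction l with
  | nil => simp
  | cons a l ih =>
    have hdeg : ((l.map fun i => symA n i i).prod 1).natDegree < l.length + 1 := by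
      have := natDegree_prod_symA_le n 1 l
      simp only [Equiv.Perm.coe_one, id_eq] at this
      exact Nat.lt_succ_of_le (this.trans (List.length_filter_le _ _))
    have h0 := Polynomial.coeff_eq_zero_of_natDegree_lt hdeg
    rw [List.map_cons, List.prod_cons, Module.End.mul_apply, List.length_cons]
    generalize (l.map fun i => symA n i i).prod 1 = p at *
    simp [symA, symD, symM, coeff_coeffDel, ih, h0]

lemma coeff_symbolA_eq_sum (n k : ℕ) :
    (symbolA n).coeff k = ∑ σ : Equiv.Perm (Fin n), (Equiv.Perm.sign σ : ℤ) •
      (((List.finRange n).map fun i => symA n (σ i) i).prod 1).coeff k := by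
  simp only [symbolA, cdet, LinearMap.sum_apply, Polynomial.finsetSum_coeff]
  refine Finset.sum_congr rfl fun σ _ => ?_
  rw [LinearMap.smul_apply, Polynomial.coeff_smul]

lemma coeff_symbolA_self (n : ℕ) : (symbolA n).coeff n = 1 := by
  rw [coeff_symbolA_eq_sum, Finset.sum_eq_single 1]
  · simpa using coeff_prod_diag n (List.finRange n)
  · intro σ _ hσ
    rw [Polynomial.coeff_eq_zero_of_natDegree_lt, smul_zero]
    refine (natDegree_prod_symA_le n σ _).trans_lt ?_
    obtain ⟨i, hi⟩ : ∃ i, σ i ≠ i := by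
      by_contra! h
      exact hσ (Equiv.ext h)
    have : ((List.finRange n).filter fun i => σ i = i).length < (List.finRange n).length := by
      rw [List.length_filter_lt_length_iff_exists]
      exact ⟨i, List.mem_finRange i, by simpa using hi⟩
    simpa using this
  · simp

lemma coeff_symbolA_of_lt (n k : ℕ) (hk : n < k) : (symbolA n).coeff k = 0 := by
  rw [coeff_symbolA_eq_sum]
  refine Finset.sum_eq_zero fun σ _ => ?_
  rw [Polynomial.coeff_eq_zero_of_natDegree_lt, smul_zero]
  refine ((natDegree_prod_symA_le n σ _).trans (List.length_filter_le _ _)).trans_lt ?_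
  simpa using hk

/-! ### Injectivity of the passage from symbols to operators -/

lemma DelA_pow_X (n : ℕ) (a : IdxA n) (N k : ℕ) :
    (DelA n ^ k) (X (a, N)) = X (a, N + k) := by
  induction k with
  | zero => simp
  | succ k ih =>
    rw [pow_succ', Module.End.mul_apply, ih]
    simp [DelA, delA, mkDerivation_X, add_assoc]

lemma eval_injective (n : ℕ) (hn : 1 ≤ n) :
    Function.Injective fun p : Polynomial (VA n) => p.eval₂ (mulHom n) (DelA n) := by
  classical
  have key : ∀ p : Polynomial (VA n), p.eval₂ (mulHom n) (DelA n) = 0 → p = 0 := by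
    intro p hp
    let a : IdxA n := ⟨(⟨0, hn⟩, ⟨0, hn⟩), le_rfl⟩
    -- `N` exceeds every derivative order occurring in the coefficients of `p`.
    let N : ℕ := ((p.support.biUnion fun k => (p.coeff k).vars).sup Prod.snd) + 1
    have hN : ∀ k j, (a, N + j) ∉ (p.coeff k).vars := by
      intro k j hmem
      have hk : k ∈ p.support := by
        rw [Polynomial.mem_support_iff]
        intro h0
        simp [h0] at hmem
      have hmem' : (a, N + j) ∈ p.support.biUnion fun k => (p.coeff k).vars :=
        Finset.mem_biUnion.mpr ⟨k, hk, hmem⟩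
      have : N + j ≤ (p.support.biUnion fun k => (p.coeff k).vars).sup Prod.snd :=
        Finset.le_sup (f := Prod.snd) hmem'
      omega
    have h1 : ∑ k ∈ p.support, p.coeff k * X (a, N + k) = 0 := by
      have := congrArg (fun f : Module.End ℂ (VA n) => f (X (a, N))) hp
      simpa [Polynomial.eval₂_eq_sum, Polynomial.sum_def, mulHom_apply, MA, LinearMap.sum_apply,
        DelA_pow_X] using this
    ext1 j
    by_contra hj
    have h2 := congrArg (pderiv (R := ℂ) (a, N + j)) h1
    rw [map_sum, map_zero, Finset.sum_eq_single j] at h2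
    · rw [Derivation.leibniz, pderiv_eq_zero_of_notMem_vars (hN j j)] at h2
      simp at h2
      exact hj (by simpa using h2)
    · intro k _ hkj
      rw [Derivation.leibniz, pderiv_eq_zero_of_notMem_vars (hN k j),
        pderiv_X_of_ne (by simpa using hkj)]
      simp
    · intro hjs
      exact absurd (Polynomial.notMem_support_iff.mp hjs) (by simpa using hj)
  intro p q hpq
  rw [← sub_eq_zero]
  refine key _ ?_
  rw [Polynomial.eval₂_sub]
  exact sub_eq_zero.mpr hpq

/-! ### Exchanging the roles of `t` and `s` -/

/-- The products `∏ (a + t b)` and `∏ (s a + b)` have degree at most the number of factors and the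
same coefficients in opposite order. -/
lemma coeff_list_prod_reverse {R α : Type*} [Ring R] (a b : α → R) (l : List α) :
    (∀ i, l.length < i →
      ((l.map fun x => Polynomial.C (a x) + Polynomial.X * Polynomial.C (b x)).prod).coeff i = 0 ∧
      ((l.map fun x => Polynomial.X * Polynomial.C (a x) + Polynomial.C (b x)).prod).coeff i = 0) ∧
    ∀ i j, i + j = l.length →
      ((l.map fun x => Polynomial.C (a x) + Polynomial.X * Polynomial.C (b x)).prod).coeff i =
      ((l.map fun x => Polynomial.X * Polynomial.C (a x) + Polynomial.C (b x)).prod).coeff j := by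
  induction l with
  | nil =>
    refine ⟨fun i hi => ?_, fun i j hij => ?_⟩
    · have : i ≠ 0 := by simp at hi; omega
      simp [Polynomial.coeff_one, this]
    · simp at hij
      simp [hij]
  | cons x l ih =>
    obtain ⟨ih0, ih1⟩ := ih
    simp only [List.map_cons, List.prod_cons, List.length_cons]
    generalize (l.map fun x => Polynomial.C (a x) + Polynomial.X * Polynomial.C (b x)).prod = P at *
    generalize (l.map fun x => Polynomial.X * Polynomial.C (a x) + Polynomial.C (b x)).prod = Q at *
    refine ⟨fun i hi => ?_, fun i j hij => ?_⟩
    · obtain ⟨i, rfl⟩ : ∃ k, i = k + 1 := ⟨i - 1, by omega⟩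
      have h1 := ih0 i (by omega)
      have h2 := ih0 (i + 1) (by omega)
      simp [add_mul, mul_assoc, Polynomial.coeff_X_mul, h1, h2]
    · rcases i with _ | i
      · obtain rfl : j = l.length + 1 := by omega
        simp [add_mul, mul_assoc, Polynomial.coeff_X_mul, ih0 (l.length + 1) (by omega),
          ih1 0 l.length (by omega)]
      · rcases j with _ | j
        · obtain rfl : i = l.length := by omega
          simp [add_mul, mul_assoc, Polynomial.coeff_X_mul, ih0 (l.length + 1) (by omega),
            ih1 l.length 0 (by omega)]
        · simp [add_mul, mul_assoc, Polynomial.coeff_X_mul, ih1 (i + 1) j (by omega),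
            ih1 i (j + 1) (by omega)]

/-- The coefficient of `t^i` in `cdet (a + t b)` is that of `s^j` in `cdet (s a + b)` when
`i + j` is the size of the matrices. -/
lemma coeff_cdet_reverse {R : Type*} [Ring R] {m : ℕ} (a b : Matrix (Fin m) (Fin m) R) (i j : ℕ)
    (hij : i + j = m) :
    (cdet (Matrix.of fun k l =>
        Polynomial.C (a k l) + Polynomial.X * Polynomial.C (b k l))).coeff i =
      (cdet (Matrix.of fun k l =>
        Polynomial.X * Polynomial.C (a k l) + Polynomial.C (b k l))).coeff j := by
  simp only [cdet, Polynomial.finsetSum_coeff, Matrix.of_apply]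
  refine Finset.sum_congr rfl fun σ _ => ?_
  rw [Polynomial.coeff_smul, Polynomial.coeff_smul]
  congr 1
  exact (coeff_list_prod_reverse (fun x => a (σ x) x) (fun x => b (σ x) x) (List.finRange m)).2 i j
    (by simpa using hij)

/-! ### Expansion of the shifted operator -/

/-- The coefficients of `e_m` in terms of the symbol of `cdet (AmatA n)`. -/
lemma eA_eq_sum (n m : ℕ) (hm : m ≤ n) :
    eA n m = ∑ i ∈ Finset.range (m + 1),
      ((n - m + i).choose i) • (MA n ((symbolA n).coeff (n - m + i)) * DelA n ^ i) := by
  have h1 : eA n m = (cdet (Matrix.of fun i j : Fin n => Polynomial.X * Polynomial.C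
      ((1 : Matrix (Fin n) (Fin n) (Module.End ℂ (VA n))) i j) +
        Polynomial.C (AmatA n i j))).coeff (n - m) := by
    rw [← coeff_cdet_reverse _ _ m (n - m) (by omega), eA]
    congr 3
    ext1 i
    ext1 j
    rw [Matrix.one_apply]
    split_ifs <;> simp
  simp only [Matrix.one_apply] at h1
  have hdeg : (symbolA n).natDegree < (n - m) + (m + 1) := by
    refine Nat.lt_of_le_of_lt ?_ (show n < (n - m) + (m + 1) by omega)
    rw [Polynomial.natDegree_le_iff_coeff_eq_zero]
    exact fun k hk => coeff_symbolA_of_lt n k hk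
  rw [h1, cdet_shift_eq_eval, Polynomial.eval₂_eq_sum_range' _ hdeg, Polynomial.finsetSum_coeff,
    Finset.sum_range_add]
  -- Powers of `∂ + s` below `n - m` do not reach `s^{n-m}`.
  rw [Finset.sum_eq_zero, zero_add]
  · refine Finset.sum_congr rfl fun i _ => ?_
    rw [RingHom.comp_apply, Polynomial.coeff_C_mul, Polynomial.coeff_X_add_C_pow,
      Nat.add_sub_cancel_left, Nat.choose_symm_add, mulHom_apply, nsmul_eq_mul, ← mul_assoc,
      Nat.cast_comm]
  · intro k hk
    rw [RingHom.comp_apply, Polynomial.coeff_C_mul, Polynomial.coeff_X_add_C_pow,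
      Nat.choose_eq_zero_of_lt (Finset.mem_range.mp hk)]
    simp

/-- The symbol `X^n + ∑_{k=1}^n w_k X^{n-k}`, where `w_k` is stored as the value of `w` at `k - 1`. -/
def symbolW (n : ℕ) (w : Fin n → VA n) : Polynomial (VA n) :=
  Polynomial.X ^ n + ∑ k : Fin n, Polynomial.C (w k) * Polynomial.X ^ (n - 1 - (k : ℕ))

lemma eval_symbolW (n : ℕ) (w : Fin n → VA n) :
    (symbolW n w).eval₂ (mulHom n) (DelA n) =
      DelA n ^ n + ∑ k : Fin n, MA n (w k) * DelA n ^ (n - 1 - (k : ℕ)) := by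
  simp [symbolW, Polynomial.eval₂_add, Polynomial.eval₂_finsetSum,
    Polynomial.C_mul_X_pow_eq_monomial,
    Polynomial.eval₂_monomial, Polynomial.eval₂_X_pow, mulHom_apply]

lemma coeff_symbolW (n : ℕ) (w : Fin n → VA n) (k : Fin n) :
    (symbolW n w).coeff (n - 1 - (k : ℕ)) = w k := by
  have hk := k.isLt
  rw [symbolW, Polynomial.coeff_add, Polynomial.coeff_X_pow, if_neg (by omega), zero_add,
    Polynomial.finsetSum_coeff, Finset.sum_eq_single k]
  · simp
  · intro b _ hb
    have hb' := b.isLt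
    have : (b : ℕ) ≠ k := fun e => hb (Fin.ext e)
    rw [Polynomial.coeff_C_mul_X_pow, if_neg (by omega)]
  · simp

lemma coeff_symbolW_self (n : ℕ) (w : Fin n → VA n) : (symbolW n w).coeff n = 1 := by
  rw [symbolW, Polynomial.coeff_add, Polynomial.coeff_X_pow, if_pos rfl,
    Polynomial.finsetSum_coeff, Finset.sum_eq_zero, add_zero]
  intro b _
  have hb' := b.isLt
  rw [Polynomial.coeff_C_mul_X_pow, if_neg (by omega)]

lemma coeff_symbolW_of_lt (n : ℕ) (w : Fin n → VA n) (j : ℕ) (hj : n < j) :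
    (symbolW n w).coeff j = 0 := by
  rw [symbolW, Polynomial.coeff_add, Polynomial.coeff_X_pow, if_neg (by omega),
    Polynomial.finsetSum_coeff, Finset.sum_eq_zero, add_zero]
  intro b _
  rw [Polynomial.coeff_C_mul_X_pow, if_neg (by omega)]

lemma coeff_symbolW_eq_wext (n : ℕ) (w : Fin n → VA n) (j : ℕ) (hj : j ≤ n) :
    (symbolW n w).coeff (n - j) = wext n w j := by
  unfold wext
  split_ifs with h
  · rw [← coeff_symbolW n w]
    congr 1
    simp only
    omega
  · obtain rfl : j = 0 := by omega
    exact coeff_symbolW_self n w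


/-- Proposition 3.6 of Molev–Ragoucy: with `w_1,…,w_n` the unique elements satisfying
`D = ∂^n + ∑_k M_{w_k}∘∂^{n−k}`, the coefficients of `det(1+tA)` are
`e_m = ∑_{i=0}^{m} binom(n−m+i, i)·M_{w_{m−i}}∘∂^i` for all `0 ≤ m ≤ n` (with `w_0 = 1`);
i.e., writing `e_m = ∑_i M_{e_{m,i}}∘∂^i`, one has `e_{m,i} = binom(n−m+i,i)·w_{m−i}`. -/
theorem walgebra_gln_e_coefficients (n : ℕ) (hn : 1 ≤ n) :
    (∃! w : Fin n → VA n,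
        cdet (AmatA n) =
          DelA n ^ n + ∑ k : Fin n, MA n (w k) * DelA n ^ (n - 1 - (k : ℕ))) ∧
      ∀ w : Fin n → VA n,
        cdet (AmatA n) =
            DelA n ^ n + ∑ k : Fin n, MA n (w k) * DelA n ^ (n - 1 - (k : ℕ)) →
          ∀ m, m ≤ n →
            eA n m =
              ∑ i ∈ Finset.range (m + 1),
                ((n - m + i).choose i) • (MA n (wext n w (m - i)) * DelA n ^ i) := by
  have hiff : ∀ w : Fin n → VA n,
      cdet (AmatA n) =
          DelA n ^ n + ∑ k : Fin n, MA n (w k) * DelA n ^ (n - 1 - (k : ℕ)) ↔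
        symbolA n = symbolW n w := by
    intro w
    rw [← eval_symbolW, cdet_eq_eval]
    exact (eval_injective n hn).eq_iff
  simp only [hiff]
  refine ⟨⟨fun k => (symbolA n).coeff (n - 1 - (k : ℕ)), ?_, ?_⟩, ?_⟩
  · ext1 j
    rcases lt_trichotomy j n with hj | rfl | hj
    · have h := coeff_symbolW n (fun k => (symbolA n).coeff (n - 1 - (k : ℕ)))
        ⟨n - 1 - j, by omega⟩
      have e : n - 1 - (n - 1 - j) = j := by omega
      simp only [e] at h
      exact h.symm
    · rw [coeff_symbolA_self, coeff_symbolW_self]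
    · rw [coeff_symbolA_of_lt n j hj, coeff_symbolW_of_lt n _ j hj]
  · intro w hw
    funext k
    rw [hw, coeff_symbolW]
  · intro w hw m hm
    rw [eA_eq_sum n m hm]
    refine Finset.sum_congr rfl fun i hi => ?_
    have hi' := Finset.mem_range.mp hi
    rw [hw, ← coeff_symbolW_eq_wext n w (m - i) (by omega),
      show n - (m - i) = n - m + i by omega]

end
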